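/- arXiv:2405.06314 — 5 statements merged into one kernel-verified Lean document; each statement's English description precedes it below -/
import Mathlib

section
/- Let X be an open subset of ℝ^p, let f : X → ℝ^q be a Lipschitz function, let a ∈ X, and let π_i : ℝ^q → ℝ denote the i-th coordinate projection (1 ≤ i ≤ q). Then the Clarke subdifferential of the scalar function π_i ∘ f at a equals the image of the Clarke subdifferential of f at a under post-composition with π_i, i.e. ∂(π_i ∘ f)(a) = {π_i ∘ u : u ∈ ∂f(a)}. -/
/-!
Taking derivatives commutes with the coordinate projection `π_i`, so every limit of derivatives of
`f` projects to a limit of derivatives of `π_i ∘ f`; as post-composition with `π_i` is linear, it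
commutes with convex hulls, and the inclusion `⊇` follows.

For `⊆`, the difficulty is that `π_i ∘ f` may be differentiable where `f` is not. Let `S` be the set
of limits of derivatives of `f` at `a`. It is compact, hence so is the convex hull `K` of its
projection (Carathéodory, `isCompact_convexHull_of_isCompact`). Suppose that a limit `v` of
derivatives of `π_i ∘ f` is not in `K`. A functional on the dual of `ℝ^p` is evaluation at a vector,
so Hahn–Banach gives `w` and `c` with `k w < c < v w` for all `k ∈ K`. By compactness,
`(π_i ∘ f)' (y) w < c` at every point `y` close to `a` where `f` is differentiable, that is, almost
everywhere near `a` by Rademacher's theorem. By Fubini, almost every line parallel to `w` meets the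
exceptional set in a null set; integrating along such lines and using continuity gives
`(π_i ∘ f) (x + t w) - (π_i ∘ f) x ≤ c t` for all `x` near `a` and all small `t ≥ 0`
(`sub_le_of_ae_fderiv_le`). Hence `(π_i ∘ f)' (y) w ≤ c` at *every* point of differentiability `y` of
`π_i ∘ f` near `a`, and `v w ≤ c` in the limit, a contradiction.
-/

open Filter Topology Metric MeasureTheory

/-- Kuratowski lower limit of a sequence of sets. -/
def KLiminf {α : Type*} [TopologicalSpace α] (A : ℕ → Set α) : Set α :=
  {x | ∃ u : ℕ → α, (∀ n, u n ∈ A n) ∧ Tendsto u atTop (𝓝 x)}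

/-- Kuratowski upper limit of a sequence of sets. -/
def KLimsup {α : Type*} [TopologicalSpace α] (A : ℕ → Set α) : Set α :=
  {x | ∃ φ : ℕ → ℕ, StrictMono φ ∧
    ∃ u : ℕ → α, (∀ n, u n ∈ A (φ n)) ∧ Tendsto u atTop (𝓝 x)}

/-- Painlevé–Kuratowski convergence of a sequence of sets to `L`. -/
def KConv {α : Type*} [TopologicalSpace α] (A : ℕ → Set α) (L : Set α) : Prop :=
  KLiminf A = L ∧ KLimsup A = L

/-- The Clarke subdifferential of `f` at `x`, relative to the open set `Ω`:
the convex hull of all limits of derivatives of `f` taken at points of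
differentiability of `f` inside `Ω` converging to `x`. -/
noncomputable def clarke {p : ℕ} {F : Type*} [NormedAddCommGroup F] [NormedSpace ℝ F]
    (Ω : Set (EuclideanSpace ℝ (Fin p))) (f : EuclideanSpace ℝ (Fin p) → F)
    (x : EuclideanSpace ℝ (Fin p)) : Set (EuclideanSpace ℝ (Fin p) →L[ℝ] F) :=
  convexHull ℝ {u | ∃ y : ℕ → EuclideanSpace ℝ (Fin p),
    (∀ n, y n ∈ Ω) ∧ (∀ n, DifferentiableAt ℝ f (y n)) ∧
    Tendsto y atTop (𝓝 x) ∧ Tendsto (fun n => fderiv ℝ f (y n)) atTop (𝓝 u)}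

/-- The graph of a multifunction `F` restricted to `Ω`. -/
def mgraph {α β : Type*} (Ω : Set α) (F : α → Set β) : Set (α × β) :=
  {q | q.1 ∈ Ω ∧ q.2 ∈ F q.1}

/-- In finite dimension the convex hull of a compact set is compact: by Carathéodory's theorem it is
a finite union of images of products of a simplex and a power of the set. -/
lemma isCompact_convexHull_of_isCompact {V : Type*} [NormedAddCommGroup V] [NormedSpace ℝ V]
    [FiniteDimensional ℝ V] {s : Set V} (hs : IsCompact s) : IsCompact (convexHull ℝ s) := by
  have key : convexHull ℝ s = ⋃ k ∈ Finset.range (Module.finrank ℝ V + 2),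
      (fun x : (Fin k → ℝ) × (Fin k → V) => ∑ j, x.1 j • x.2 j) ''
        (stdSimplex ℝ (Fin k) ×ˢ Set.pi Set.univ fun _ => s) := by
    apply Set.Subset.antisymm
    · intro x hx
      obtain ⟨ι, _, z, wt, hz, hai, hpos, hsum, hx⟩ := eq_pos_convex_span_of_mem_convexHull hx
      have hcard : Fintype.card ι ≤ Module.finrank ℝ V + 1 :=
        hai.card_le_finrank_succ.trans (by gcongr; exact Submodule.finrank_le _)
      let e := Fintype.equivFin ι
      simp only [Set.mem_iUnion]
      refine ⟨Fintype.card ι, Finset.mem_range.2 (Nat.lt_succ_of_le hcard),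
        (wt ∘ e.symm, z ∘ e.symm), ⟨⟨fun j => (hpos _).le, ?_⟩, ?_⟩, ?_⟩
      · rw [← hsum]; exact e.symm.sum_comp wt
      · intro j _; exact hz ⟨_, rfl⟩
      · rw [← hx]; exact e.symm.sum_comp fun i => wt i • z i
    · simp only [Set.iUnion_subset_iff]
      rintro k - _ ⟨⟨wt, z⟩, ⟨⟨h0, h1⟩, hz⟩, rfl⟩
      exact (convex_convexHull ℝ s).sum_mem (fun j _ => h0 j) h1
        fun j _ => subset_convexHull ℝ s (hz j trivial)
  rw [key]
  refine (Finset.range _).isCompact_biUnion fun k _ => ?_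
  exact ((isCompact_stdSimplex ℝ (Fin k)).prod (isCompact_univ_pi fun _ => hs)).image
    (by fun_prop)

/-- An almost-everywhere bound on a directional derivative of a Lipschitz function on a ball
integrates to a bound on its increments in that direction. -/
lemma sub_le_of_ae_fderiv_le {p : ℕ} {G : EuclideanSpace ℝ (Fin p) → ℝ} {K : NNReal}
    (hG : LipschitzWith K G) {a w : EuclideanSpace ℝ (Fin p)} {c δ : ℝ}
    (h : ∀ᵐ x, x ∈ ball a δ → DifferentiableAt ℝ G x ∧ fderiv ℝ G x w ≤ c)
    {x : EuclideanSpace ℝ (Fin p)} {t : ℝ} (ht : 0 ≤ t) (hx : x ∈ ball a δ)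
    (hxt : x + t • w ∈ ball a δ) : G (x + t • w) - G x ≤ c * t := by
  -- The disintegration lemma needs a measurable set of good points.
  obtain ⟨N, hbad, hNmeas, hN0⟩ := exists_measurable_superset_of_null (ae_iff.1 h)
  have hae : ∀ᵐ y : EuclideanSpace ℝ (Fin p), y ∈ Nᶜ := by
    rw [ae_iff]; simpa using hN0
  have hlines := (ae_ae_add_linearMap_mem_iff (LinearMap.toSpanSingleton ℝ _ w) volume volume
    hNmeas.compl).2 hae
  have hdense := Measure.dense_of_ae hlines
  let U : Set (EuclideanSpace ℝ (Fin p)) := ball a δ ∩ (fun y => y + t • w) ⁻¹' ball a δ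
  have hU : IsOpen U := isOpen_ball.inter (isOpen_ball.preimage (by fun_prop))
  have hGc := hG.continuous
  have hclosed : IsClosed {y | G (y + t • w) - G y ≤ c * t} :=
    isClosed_le (by fun_prop) continuous_const
  refine closure_minimal ?_ hclosed (hdense.open_subset_closure_inter hU ⟨hx, hxt⟩)
  rintro y ⟨⟨hy, hyt⟩, hline⟩
  simp only [Set.mem_ofPred_eq, LinearMap.toSpanSingleton_apply] at hline ⊢
  have hlip : LipschitzWith (K * ‖w‖₊) (fun s : ℝ => G (y + s • w)) := by
    refine hG.comp (LipschitzWith.of_dist_le_mul fun r s => ?_)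
    rw [dist_add_left, dist_eq_norm, ← sub_smul, norm_smul, dist_eq_norm, mul_comm]
    rfl
  have hac := (hlip.lipschitzOnWith (s := Set.uIcc 0 t)).absolutelyContinuousOnInterval
  have hint := hac.integral_deriv_eq_sub
  have hmono : ∫ s in (0 : ℝ)..t, deriv (fun s : ℝ => G (y + s • w)) s ≤
      ∫ _ in (0 : ℝ)..t, c := by
    refine intervalIntegral.integral_mono_ae_restrict ht hac.intervalIntegrable_deriv
      intervalIntegrable_const ?_
    refine (ae_restrict_iff' measurableSet_Icc).2 ?_
    filter_upwards [hline] with s hs hst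
    have hsb : y + s • w ∈ ball a δ := by
      refine (convex_ball a δ).segment_subset hy hyt ?_
      rw [segment_eq_image']
      rcases ht.eq_or_lt with rfl | ht'
      · exact ⟨0, by simp, by simp [le_antisymm hst.2 hst.1]⟩
      · exact ⟨s / t, ⟨div_nonneg hst.1 ht, div_le_one_of_le₀ hst.2 ht⟩, by
          simp [smul_smul, div_mul_cancel₀ _ ht'.ne']⟩
    have hgood : DifferentiableAt ℝ G (y + s • w) ∧ fderiv ℝ G (y + s • w) w ≤ c := by
      by_contra hcon
      exact hs (hbad fun hh => hcon (hh hsb))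
    have hd : HasDerivAt (fun s : ℝ => y + s • w) w s := by
      simpa using ((hasDerivAt_id s).smul_const w).const_add y
    exact (hgood.1.hasFDerivAt.comp_hasDerivAt s hd).deriv.trans_le hgood.2
  rw [hint] at hmono
  simpa [mul_comm] using hmono

/-- A continuous linear functional on the dual of `ℝ^p` is evaluation at a vector. -/
lemma exists_eq_eval {p : ℕ} (φ : (EuclideanSpace ℝ (Fin p) →L[ℝ] ℝ) →L[ℝ] ℝ) :
    ∃ w, ∀ v, φ v = v w := by
  let T := InnerProductSpace.toDual ℝ (EuclideanSpace ℝ (Fin p))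
  let ψ : EuclideanSpace ℝ (Fin p) →L[ℝ] ℝ :=
    φ.comp (innerSL ℝ)
  refine ⟨T.symm ψ, fun v => ?_⟩
  obtain ⟨x, rfl⟩ := T.surjective v
  have h1 : inner ℝ (T.symm ψ) x = ψ x := InnerProductSpace.toDual_symm_apply
  have h2 : T x (T.symm ψ) = inner ℝ x (T.symm ψ) := InnerProductSpace.toDual_apply_apply
  rw [h2, real_inner_comm, h1]
  rfl

/-- The set of limits at `x` of derivatives of `f` at points of `Ω`, whose convex hull is
`clarke Ω f x`. -/
def limitDerivs {p : ℕ} {F : Type*} [NormedAddCommGroup F] [NormedSpace ℝ F]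
    (Ω : Set (EuclideanSpace ℝ (Fin p))) (f : EuclideanSpace ℝ (Fin p) → F)
    (x : EuclideanSpace ℝ (Fin p)) : Set (EuclideanSpace ℝ (Fin p) →L[ℝ] F) :=
  {u | ∃ y : ℕ → EuclideanSpace ℝ (Fin p),
    (∀ n, y n ∈ Ω) ∧ (∀ n, DifferentiableAt ℝ f (y n)) ∧
    Tendsto y atTop (𝓝 x) ∧ Tendsto (fun n => fderiv ℝ f (y n)) atTop (𝓝 u)}

lemma isCompact_limitDerivs {p q : ℕ} {X : Set (EuclideanSpace ℝ (Fin p))}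
    {f : EuclideanSpace ℝ (Fin p) → EuclideanSpace ℝ (Fin q)} {L : ℝ}
    (hb : ∀ x ∈ X, ‖fderiv ℝ f x‖ ≤ L) (a : EuclideanSpace ℝ (Fin p)) :
    IsCompact (limitDerivs X f a) := by
  -- `u` is a limit of derivatives at `a` iff `(a, u)` is in the closure of the graph of `f'`.
  have hcl : limitDerivs X f a = (fun u => (a, u)) ⁻¹' closure
      ((fun y => (y, fderiv ℝ f y)) '' {y | y ∈ X ∧ DifferentiableAt ℝ f y}) := by
    ext u
    simp only [Set.mem_preimage, mem_closure_iff_seq_limit]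
    constructor
    · rintro ⟨y, hX, hd, hy, hu⟩
      exact ⟨fun n => (y n, fderiv ℝ f (y n)), fun n => ⟨y n, ⟨hX n, hd n⟩, rfl⟩,
        hy.prodMk_nhds hu⟩
    · rintro ⟨z, hz, hlim⟩
      choose y hy hyz using hz
      obtain rfl : (fun n => (y n, fderiv ℝ f (y n))) = z := funext hyz
      exact ⟨y, fun n => (hy n).1, fun n => (hy n).2, (continuous_fst.tendsto _).comp hlim,
        (continuous_snd.tendsto _).comp hlim⟩
  have hclosed : IsClosed (limitDerivs X f a) := by
    rw [hcl]; exact isClosed_closure.preimage (by fun_prop)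
  refine (isCompact_closedBall (0 : EuclideanSpace ℝ (Fin p) →L[ℝ] EuclideanSpace ℝ (Fin q))
    L).of_isClosed_subset hclosed ?_
  rintro u ⟨y, hX, -, -, hu⟩
  rw [mem_closedBall_zero_iff]
  exact le_of_tendsto hu.norm (Eventually.of_forall fun n => hb _ (hX n))

/-- The derivative of a coordinate of `f` where `f` is differentiable. -/
lemma hasFDerivAt_coord {p q : ℕ} {f : EuclideanSpace ℝ (Fin p) → EuclideanSpace ℝ (Fin q)}
    {x : EuclideanSpace ℝ (Fin p)} (h : DifferentiableAt ℝ f x) (i : Fin q) :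
    HasFDerivAt (fun x => f x i)
      ((EuclideanSpace.proj i : EuclideanSpace ℝ (Fin q) →L[ℝ] ℝ).comp (fderiv ℝ f x)) x :=
  (EuclideanSpace.proj i : EuclideanSpace ℝ (Fin q) →L[ℝ] ℝ).hasFDerivAt.comp x h.hasFDerivAt

/-- If every projected limit of derivatives of `f` at `a` is below `c` in the direction `w`, then so
are the derivatives of `π_i ∘ f` at the points of differentiability of `f` near `a`. -/
lemma exists_ball_fderiv_lt {p q : ℕ} {X : Set (EuclideanSpace ℝ (Fin p))}
    {f : EuclideanSpace ℝ (Fin p) → EuclideanSpace ℝ (Fin q)} {L : ℝ}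
    (hb : ∀ x ∈ X, ‖fderiv ℝ f x‖ ≤ L) (hXopen : IsOpen X) {a : EuclideanSpace ℝ (Fin p)}
    (ha : a ∈ X) (i : Fin q) {w : EuclideanSpace ℝ (Fin p)} {c : ℝ}
    (hc : ∀ u ∈ limitDerivs X f a, u w i < c) :
    ∃ δ > 0, ball a δ ⊆ X ∧
      ∀ y ∈ ball a δ, DifferentiableAt ℝ f y → fderiv ℝ f y w i < c := by
  have hev : ∀ᶠ y in 𝓝 a, y ∈ X ∧ (DifferentiableAt ℝ f y → fderiv ℝ f y w i < c) := by
    refine Filter.Eventually.and (hXopen.mem_nhds ha) ?_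
    by_contra hcon
    obtain ⟨y, hya, hy⟩ := exists_seq_forall_of_frequently
      ((Filter.not_eventually.1 hcon).and_eventually (hXopen.mem_nhds ha))
    simp only [Classical.not_imp, not_lt] at hy
    obtain ⟨u, -, φ, hφ, hu⟩ := (isCompact_closedBall
      (0 : EuclideanSpace ℝ (Fin p) →L[ℝ] EuclideanSpace ℝ (Fin q)) L).tendsto_subseq
      (x := fun n => fderiv ℝ f (y n)) fun n => mem_closedBall_zero_iff.2 (hb _ (hy n).2)
    have huw := hc u ⟨y ∘ φ, fun n => (hy _).2, fun n => (hy _).1.1, hya.comp hφ.tendsto_atTop, hu⟩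
    have hcont : Continuous fun u : EuclideanSpace ℝ (Fin p) →L[ℝ] EuclideanSpace ℝ (Fin q) =>
      u w i := by fun_prop
    exact huw.not_ge (ge_of_tendsto ((hcont.tendsto u).comp hu)
      (Eventually.of_forall fun n => (hy (φ n)).1.2))
  obtain ⟨δ, hδ, hball⟩ := Metric.eventually_nhds_iff_ball.1 hev
  exact ⟨δ, hδ, fun y hy => (hball y hy).1, fun y hy => (hball y hy).2⟩

/-- for a Lipschitz `f : X → ℝ^q` on an open set `X` and `a ∈ X`,
`∂(π_i ∘ f)(a) = {π_i ∘ u : u ∈ ∂f(a)}`. -/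
theorem stmt_4 {p q : ℕ} (X : Set (EuclideanSpace ℝ (Fin p))) (hXopen : IsOpen X)
    (f : EuclideanSpace ℝ (Fin p) → EuclideanSpace ℝ (Fin q))
    (L : ℝ) (hL : 0 < L)
    (hLip : ∀ x ∈ X, ∀ y ∈ X, ‖f x - f y‖ ≤ L * ‖x - y‖)
    (a : EuclideanSpace ℝ (Fin p)) (ha : a ∈ X) (i : Fin q) :
    clarke X (fun x => f x i) a =
      (fun u => (EuclideanSpace.proj i).comp u) '' clarke X f a := by
  let P : (EuclideanSpace ℝ (Fin p) →L[ℝ] EuclideanSpace ℝ (Fin q)) →L[ℝ]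
      (EuclideanSpace ℝ (Fin p) →L[ℝ] ℝ) :=
    ContinuousLinearMap.compL ℝ _ _ _ (EuclideanSpace.proj i)
  have himage : (fun u => (EuclideanSpace.proj i).comp u) '' clarke X f a =
      convexHull ℝ (P '' limitDerivs X f a) :=
    P.toLinearMap.image_convexHull (limitDerivs X f a)
  rw [himage]
  have hLipOn : LipschitzOnWith ⟨L, hL.le⟩ f X :=
    LipschitzOnWith.of_dist_le_mul fun x hx y hy => by
      rw [dist_eq_norm, dist_eq_norm]; exact hLip x hx y hy
  have hb : ∀ x ∈ X, ‖fderiv ℝ f x‖ ≤ L := fun x hx =>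
    norm_fderiv_le_of_lipschitzOn ℝ (hXopen.mem_nhds hx) hLipOn
  apply Set.Subset.antisymm
  · refine convexHull_min ?_ (convex_convexHull ℝ _)
    rintro v ⟨y, hyX, hyd, hya, hyv⟩
    by_contra hv
    obtain ⟨φ, c, hlt, hcv⟩ := geometric_hahn_banach_closed_point (convex_convexHull ℝ _)
      (isCompact_convexHull_of_isCompact
        ((isCompact_limitDerivs hb a).image P.continuous)).isClosed hv
    obtain ⟨w, hw⟩ := exists_eq_eval φ
    obtain ⟨δ, hδ, hδX, hδc⟩ := exists_ball_fderiv_lt hb hXopen ha i (w := w) (c := c)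
      fun u hu => by
        have := hlt _ (subset_convexHull ℝ _ ⟨u, hu, rfl⟩)
        rwa [hw] at this
    -- A globally Lipschitz extension of the coordinate, so that lines may leave `X`.
    have hgLip : LipschitzOnWith ⟨L, hL.le⟩ (fun x => f x i) X :=
      LipschitzOnWith.of_dist_le_mul fun x hx z hz => by
        rw [dist_eq_norm, dist_eq_norm]
        exact (PiLp.norm_apply_le (f x - f z) i).trans (hLip x hx z hz)
    obtain ⟨G, hG, hGeq⟩ := hgLip.extend_real
    have hnhds : ∀ x ∈ X, (fun x => f x i) =ᶠ[𝓝 x] G := fun x hx =>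
      hGeq.eventuallyEq_of_mem (hXopen.mem_nhds hx)
    have hae : ∀ᵐ x, x ∈ ball a δ → DifferentiableAt ℝ G x ∧ fderiv ℝ G x w ≤ c := by
      filter_upwards [hLipOn.ae_differentiableWithinAt_of_mem (μ := volume)] with x hx hxb
      have hxX := hδX hxb
      have hfx := (hx hxX).differentiableAt (hXopen.mem_nhds hxX)
      have hGx := (hasFDerivAt_coord hfx i).congr_of_eventuallyEq (hnhds x hxX).symm
      refine ⟨hGx.differentiableAt, ?_⟩
      rw [hGx.fderiv]
      exact (hδc x hxb hfx).le
    have hbound : ∀ z ∈ ball a δ, DifferentiableAt ℝ (fun x => f x i) z →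
        fderiv ℝ (fun x => f x i) z w ≤ c := by
      intro z hz hdz
      have hGz := hdz.hasFDerivAt.congr_of_eventuallyEq (hnhds z (hδX hz)).symm
      have hline : HasDerivAt (fun t : ℝ => z + t • w) w 0 := by
        simpa using ((hasDerivAt_id (0 : ℝ)).smul_const w).const_add z
      have hd : HasDerivAt (fun t : ℝ => G (z + t • w)) (fderiv ℝ (fun x => f x i) z w) 0 :=
        HasFDerivAt.comp_hasDerivAt (0 : ℝ) (by simpa using hGz) hline
      refine le_of_tendsto hd.tendsto_slope_zero_right ?_
      have hmem : ∀ᶠ t : ℝ in 𝓝[>] 0, z + t • w ∈ ball a δ :=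
        nhdsWithin_le_nhds (hline.continuousAt.eventually_mem
          (isOpen_ball.mem_nhds (by simpa using hz)))
      filter_upwards [hmem, self_mem_nhdsWithin] with t htb ht
      have ht0 : (0 : ℝ) < t := ht
      have := sub_le_of_ae_fderiv_le hG hae ht0.le hz htb
      simp only [zero_add, zero_smul, add_zero, smul_eq_mul]
      rw [inv_mul_le_iff₀ ht0]
      linarith
    have hvw : v w ≤ c := by
      have hcont : Continuous fun u : EuclideanSpace ℝ (Fin p) →L[ℝ] ℝ => u w := by fun_prop
      refine le_of_tendsto ((hcont.tendsto v).comp hyv) ?_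
      filter_upwards [hya.eventually_mem (ball_mem_nhds a hδ)] with n hn
      exact hbound _ hn (hyd n)
    rw [hw] at hcv
    exact hcv.not_ge hvw
  · refine convexHull_mono ?_
    rintro _ ⟨u, ⟨y, hyX, hyd, hya, hyu⟩, rfl⟩
    refine ⟨y, hyX, fun n => (hasFDerivAt_coord (hyd n) i).differentiableAt, hya, ?_⟩
    simp_rw [fun n => (hasFDerivAt_coord (hyd n) i).fderiv]
    exact (P.continuous.tendsto u).comp hyu
end

section
/- Let X_n ⊂ ℝ^p be a sequence of closed sets converging in the Painlevé–Kuratowski sense to a nonempty closed set X ⊂ ℝ^p. Then the metric projection multifunctions P_{X_n} converge graphically to P_X, i.e. the graphs {(x, y) : y ∈ P_{X_n}(x)} converge in the Painlevé–Kuratowski sense to the graph {(x, y) : y ∈ P_X(x)}. -/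
/-!
Upper limits: if `y_k` is nearest to `x_k` in `X_{φ k}` and `(x_k, y_k) → (x, y)`, then `y ∈ X`,
and comparing `y_k` with a sequence `a_n ∈ X_n` tending to an arbitrary `a ∈ X` gives
`|x - y| ≤ |x - a|` in the limit (`klimsup_graph_subset`).

Lower limits: let `y` be nearest to `x` in `X`. For `0 ≤ s < 1` the point `x_s = y + s (x - y)` has
`y` as its *only* nearest point in `X` (`nearestPts_segment_unique`). Any choice of nearest points
to `x_s` in the sets `X_n` is bounded, and by the first part all its cluster points are nearest to
`x_s` in `X`, so it converges to `y` (`tendsto_of_unique_nearest`). Hence `(x_s, y)` belongs to the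
lower limit of the graphs; since a lower limit is closed (`isClosed_kliminf`), letting `s → 1`
puts `(x, y)` in it as well.
-/

open Filter Topology Metric MeasureTheory

/-- The set of nearest points to `x` in `A`. -/
def nearestPts {α : Type*} [MetricSpace α] (A : Set α) (x : α) : Set α :=
  {a ∈ A | dist x a = infDist x A}

theorem kliminf_subset_klimsup {α : Type*} [TopologicalSpace α] (A : ℕ → Set α) :
    KLiminf A ⊆ KLimsup A := by
  rintro x ⟨u, hu, hx⟩
  exact ⟨id, strictMono_id, u, hu, hx⟩

theorem isClosed_kliminf {α : Type*} [PseudoMetricSpace α] (A : ℕ → Set α) :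
    IsClosed (KLiminf A) := by
  refine isClosed_of_closure_subset fun x hx => ?_
  have hne : ∀ n, (A n).Nonempty := by
    obtain ⟨_, u, hu, -⟩ := closure_nonempty_iff.1 ⟨x, hx⟩
    exact fun n => ⟨u n, hu n⟩
  have hlim : Tendsto (fun n => infDist x (A n)) atTop (𝓝 0) := by
    rw [Metric.tendsto_atTop]
    intro ε hε
    obtain ⟨z, ⟨u, hu, hz⟩, hxz⟩ := Metric.mem_closure_iff.1 hx (ε / 2) (half_pos hε)
    obtain ⟨N, hN⟩ := Metric.tendsto_atTop.1 hz (ε / 2) (half_pos hε)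
    refine ⟨N, fun n hn => ?_⟩
    rw [Real.dist_eq, sub_zero, abs_of_nonneg infDist_nonneg]
    have h1 := infDist_le_dist_of_mem (x := x) (hu n)
    have h2 := dist_triangle x z (u n)
    have h3 := hN n hn
    rw [dist_comm] at h3
    linarith
  -- Points of `A n` that realise the distance to `x` up to an error `1 / (n + 1)`.
  have hex : ∀ n : ℕ, ∃ a ∈ A n, dist x a < infDist x (A n) + 1 / ((n : ℝ) + 1) := fun n =>
    (infDist_lt_iff (hne n)).1 (lt_add_of_pos_right _ Nat.one_div_pos_of_nat)
  choose u hu hux using hex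
  refine ⟨u, hu, tendsto_iff_dist_tendsto_zero.2 ?_⟩
  refine squeeze_zero (fun _ => dist_nonneg) (fun n => ?_)
    (by simpa using hlim.add tendsto_one_div_add_atTop_nhds_zero_nat)
  rw [dist_comm]
  simpa using (hux n).le

theorem klimsup_graph_subset {α : Type*} [MetricSpace α] {Xs : ℕ → Set α} {X : Set α}
    (hX : X.Nonempty) (hK : KConv Xs X) :
    KLimsup (fun n => mgraph Set.univ (nearestPts (Xs n))) ⊆ mgraph Set.univ (nearestPts X) := by
  rintro ⟨x, y⟩ ⟨φ, hφ, u, hu, hlim⟩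
  have hx : Tendsto (fun k => (u k).1) atTop (𝓝 x) := (continuous_fst.tendsto _).comp hlim
  have hy : Tendsto (fun k => (u k).2) atTop (𝓝 y) := (continuous_snd.tendsto _).comp hlim
  have hyX : y ∈ X := hK.2 ▸ ⟨φ, hφ, fun k => (u k).2, fun k => (hu k).2.1, hy⟩
  refine ⟨Set.mem_univ _, hyX, le_antisymm ?_ (infDist_le_dist_of_mem hyX)⟩
  refine (le_infDist hX).2 fun a ha => ?_
  obtain ⟨v, hv, hva⟩ : a ∈ KLiminf Xs := hK.1.symm ▸ ha
  refine le_of_tendsto_of_tendsto' (hx.dist hy) (hx.dist (hva.comp hφ.tendsto_atTop)) fun k => ?_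
  rw [(hu k).2.2]
  exact infDist_le_dist_of_mem (hv _)

/-- Moving from `x` strictly towards a nearest point `y` of `X` makes `y` the only nearest point. -/
theorem nearestPts_segment_unique {E : Type*} [NormedAddCommGroup E] [InnerProductSpace ℝ E]
    {X : Set E} {x y z : E} {s : ℝ} (hs0 : 0 ≤ s) (hs1 : s < 1) (hy : y ∈ nearestPts X x)
    (hz : z ∈ nearestPts X (y + s • (x - y))) : z = y := by
  have h1 : ‖x - y‖ ≤ ‖(x - y) - (z - y)‖ := by
    rw [sub_sub_sub_cancel_right, ← dist_eq_norm, ← dist_eq_norm, hy.2]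
    exact infDist_le_dist_of_mem hz.1
  have h2 : ‖s • (x - y) - (z - y)‖ ≤ ‖s • (x - y)‖ := by
    have h := infDist_le_dist_of_mem (x := y + s • (x - y)) hy.1
    rw [← hz.2, dist_eq_norm, dist_eq_norm, add_sub_cancel_left] at h
    rwa [show s • (x - y) - (z - y) = y + s • (x - y) - z by abel]
  -- With `v = x - y`, `w = z - y`: `h1` says `2⟪v, w⟫ ≤ |w|²` and `h2` says `|w|² ≤ 2s⟪v, w⟫`,
  -- so `|w|² ≤ s |w|²` and `w = 0`.
  have h1' := pow_le_pow_left₀ (norm_nonneg _) h1 2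
  have h2' := pow_le_pow_left₀ (norm_nonneg _) h2 2
  rw [norm_sub_sq_real (x - y)] at h1'
  rw [norm_sub_sq_real (s • (x - y))] at h2'
  rw [real_inner_smul_left] at h2'
  have h3 : ‖z - y‖ ^ 2 = 0 := by
    nlinarith [sq_nonneg ‖z - y‖, mul_nonneg hs0 (sub_nonneg.2 h1')]
  exact sub_eq_zero.1 (norm_eq_zero.1 (pow_eq_zero_iff two_ne_zero |>.1 h3))

/-- Nearest points to `x` in `X_n` converge as soon as the limit set has a single nearest point. -/
theorem tendsto_of_unique_nearest {α : Type*} [MetricSpace α] [ProperSpace α] {Xs : ℕ → Set α}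
    {X : Set α} (hX : X.Nonempty) (hK : KConv Xs X) {x y : α}
    (huniq : ∀ z ∈ nearestPts X x, z = y) {q : ℕ → α} (hq : ∀ n, q n ∈ nearestPts (Xs n) x) :
    Tendsto q atTop (𝓝 y) := by
  obtain ⟨a, ha⟩ := hX
  obtain ⟨v, hv, hva⟩ : a ∈ KLiminf Xs := hK.1.symm ▸ ha
  obtain ⟨R, hR⟩ := (tendsto_const_nhds (x := x) |>.dist hva).bddAbove_range
  have hqR : ∀ n, q n ∈ closedBall x R := fun n => by
    rw [mem_closedBall, dist_comm, (hq n).2]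
    exact (infDist_le_dist_of_mem (hv n)).trans (hR ⟨n, rfl⟩)
  refine tendsto_of_subseq_tendsto fun ns hns => ?_
  obtain ⟨φ, -, hφ⟩ := strictMono_subseq_of_tendsto_atTop hns
  obtain ⟨z, -, ψ, hψ, hz⟩ :=
    tendsto_subseq_of_bounded (isBounded_closedBall (x := x) (r := R)) fun n => hqR (ns (φ n))
  have hzy : z = y := huniq z (klimsup_graph_subset ⟨a, ha⟩ hK
    (show (x, z) ∈ _ from ⟨fun n => ns (φ (ψ n)), hφ.comp hψ, fun n => (x, q (ns (φ (ψ n)))),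
      fun n => ⟨Set.mem_univ _, hq _⟩, tendsto_const_nhds.prodMk_nhds hz⟩)).2
  exact ⟨φ ∘ ψ, hzy ▸ hz⟩

/-- if closed sets `X_n ⊆ ℝ^p` converge to a nonempty closed set `X` in
the Painlevé–Kuratowski sense, then the metric projections `P_{X_n}` converge
graphically to `P_X`. -/
theorem stmt_9 {p : ℕ} (Xs : ℕ → Set (EuclideanSpace ℝ (Fin p)))
    (hXs : ∀ n, IsClosed (Xs n))
    (X : Set (EuclideanSpace ℝ (Fin p))) (hXne : X.Nonempty) (hXcl : IsClosed X)
    (hK : KConv Xs X) :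
    KConv (fun n => mgraph Set.univ (nearestPts (Xs n)))
      (mgraph Set.univ (nearestPts X)) := by
  have hsup := klimsup_graph_subset hXne hK
  suffices hinf : mgraph Set.univ (nearestPts X) ⊆
      KLiminf (fun n => mgraph Set.univ (nearestPts (Xs n))) from
    ⟨((kliminf_subset_klimsup _).trans hsup).antisymm hinf,
      hsup.antisymm (hinf.trans (kliminf_subset_klimsup _))⟩
  rintro ⟨x, y⟩ ⟨-, hy⟩
  change y ∈ nearestPts X x at hy
  have hne : ∀ n, (Xs n).Nonempty := by
    obtain ⟨v, hv, -⟩ : y ∈ KLiminf Xs := hK.1.symm ▸ hy.1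
    exact fun n => ⟨v n, hv n⟩
  have hseg : ∀ s : ℝ, 0 ≤ s → s < 1 → (y + s • (x - y), y) ∈
      KLiminf (fun n => mgraph Set.univ (nearestPts (Xs n))) := by
    intro s hs0 hs1
    have hex : ∀ n, ∃ q, q ∈ nearestPts (Xs n) (y + s • (x - y)) := fun n =>
      let ⟨q, hq, h⟩ := (hXs n).exists_infDist_eq_dist (hne n) (y + s • (x - y))
      ⟨q, hq, h.symm⟩
    choose q hq using hex
    exact ⟨fun n => (y + s • (x - y), q n), fun n => ⟨Set.mem_univ _, hq n⟩,
      tendsto_const_nhds.prodMk_nhds (tendsto_of_unique_nearest hXne hK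
        (fun z hz => nearestPts_segment_unique hs0 hs1 hy hz) hq)⟩
  have hcont : Continuous fun s : ℝ => (y + s • (x - y), y) := by fun_prop
  have hlim : Tendsto (fun s : ℝ => (y + s • (x - y), y)) (𝓝[<] 1) (𝓝 (x, y)) := by
    have h := hcont.tendsto 1
    simp only [one_smul, add_sub_cancel] at h
    exact h.mono_left nhdsWithin_le_nhds
  refine (isClosed_kliminf _).mem_of_tendsto hlim ?_
  filter_upwards [Ioo_mem_nhdsLT (zero_lt_one' ℝ)] with s hs
  exact hseg s hs.1.le hs.2
end

section
/- Let X_n ⊂ ℝ^p be a sequence of closed sets converging in the Painlevé–Kuratowski sense to a nonempty closed set X ⊂ ℝ^p. Then the Kuratowski upper limit of the graphs of the multifunctions x ↦ convexHull(P_{X_n}(x)) is contained in the graph of x ↦ convexHull(P_X(x)), i.e. Limsup_{n→∞} {(x, y) : y ∈ convexHull(P_{X_n}(x))} ⊂ {(x, y) : y ∈ convexHull(P_X(x))}. -/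
/-!
The projections are upper semicontinuous along the sequence: if `a_n` is a nearest point of `X_{φ n}`
to `x_n`, with `x_n → x` and `a_n → a`, then `a ∈ X` by the upper-limit half of the convergence, and
every `b ∈ X` is a limit of points `b_n ∈ X_n`, so `dist x_n a_n ≤ dist x_n b_{φ n}` passes to the
limit and `a` is a nearest point of `X` to `x`. Since the nearest points `a_n` stay bounded,
compactness upgrades this to: for every `ε > 0`, eventually `P_{X_{φ n}}(x_n)` lies in the open
`ε`-thickening of `P_X(x)` (`eventually_nearestPts_subset_thickening`).

The closed `ε`-thickening of `conv P_X(x)` is convex, so it eventually contains `conv P_{X_{φ n}}(x_n)`. Hence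
a limit of points of these hulls lies in the closure of `conv P_X(x)`, which is `conv P_X(x)` itself
because the convex hull of a compact set in finite dimension is compact, by Carathéodory's theorem
(`isCompact_convexHull_of_finiteDimensional`).
-/

open Filter Topology Metric MeasureTheory

/-- By Carathéodory's theorem, the convex hull of `s` is the union over `k ≤ dim E + 1` of the images
of `stdSimplex × s ^ k` under `(w, z) ↦ ∑ i, w i • z i`, each of which is compact. -/
theorem isCompact_convexHull_of_finiteDimensional {E : Type*} [NormedAddCommGroup E]
    [NormedSpace ℝ E] [FiniteDimensional ℝ E] {s : Set E} (hs : IsCompact s) :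
    IsCompact (convexHull ℝ s) := by
  have key : convexHull ℝ s = ⋃ k ∈ Finset.range (Module.finrank ℝ E + 2),
      (fun q : (Fin k → ℝ) × (Fin k → E) => ∑ i, q.1 i • q.2 i) ''
        (stdSimplex ℝ (Fin k) ×ˢ Set.univ.pi fun _ => s) := by
    apply Set.Subset.antisymm
    · intro y hy
      obtain ⟨ι, _, z, w, hz, hai, hw, hw1, hy⟩ := eq_pos_convex_span_of_mem_convexHull hy
      let e := (Fintype.equivFin ι).symm
      have hcard : Fintype.card ι < Module.finrank ℝ E + 2 := by
        have h1 := hai.card_le_finrank_succ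
        have h2 := Submodule.finrank_le (vectorSpan ℝ (Set.range z))
        omega
      simp only [Set.mem_iUnion]
      refine ⟨Fintype.card ι, Finset.mem_range.2 hcard, (w ∘ e, z ∘ e),
        ⟨⟨fun i => (hw _).le, ?_⟩, fun i _ => hz ⟨_, rfl⟩⟩, ?_⟩
      · simpa using (e.sum_comp w).trans hw1
      · exact (e.sum_comp fun i => w i • z i).trans hy
    · simp only [Set.iUnion_subset_iff]
      rintro k - _ ⟨⟨w, z⟩, ⟨⟨hw, hw1⟩, hz⟩, rfl⟩
      exact (convex_convexHull ℝ s).sum_mem (fun i _ => hw i) hw1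
        fun i _ => subset_convexHull ℝ s (hz i trivial)
  rw [key]
  refine (Finset.range _).isCompact_biUnion fun k _ => ?_
  exact ((isCompact_stdSimplex ℝ (Fin k)).prod (isCompact_univ_pi fun _ => hs)).image
    (by fun_prop)

theorem isCompact_nearestPts {α : Type*} [MetricSpace α] [ProperSpace α] {A : Set α}
    (hA : IsClosed A) (x : α) : IsCompact (nearestPts A x) := by
  refine (isCompact_closedBall x (infDist x A)).of_isClosed_subset ?_ ?_
  · exact hA.inter (isClosed_eq (by fun_prop) continuous_const)
  · intro a ha
    rw [mem_closedBall, dist_comm]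
    exact ha.2.le

/-- The graph of `x ↦ P_{X_n}(x)` has its upper limit inside the graph of `x ↦ P_X(x)`. -/
theorem mem_nearestPts_of_tendsto {α : Type*} [MetricSpace α] {Xs : ℕ → Set α} {X : Set α}
    (hK : KConv Xs X) {φ : ℕ → ℕ} (hφ : StrictMono φ) {x a : ℕ → α} {x₀ a₀ : α}
    (hx : Tendsto x atTop (𝓝 x₀)) (ha : Tendsto a atTop (𝓝 a₀))
    (hmem : ∀ n, a n ∈ nearestPts (Xs (φ n)) (x n)) : a₀ ∈ nearestPts X x₀ := by
  have haX : a₀ ∈ X := hK.2 ▸ ⟨φ, hφ, a, fun n => (hmem n).1, ha⟩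
  refine ⟨haX, le_antisymm ?_ (infDist_le_dist_of_mem haX)⟩
  refine (le_infDist ⟨a₀, haX⟩).2 fun b hb => ?_
  obtain ⟨u, hu, hub⟩ : b ∈ KLiminf Xs := hK.1.symm ▸ hb
  refine le_of_tendsto_of_tendsto' (hx.dist ha) (hx.dist (hub.comp hφ.tendsto_atTop)) fun n => ?_
  rw [(hmem n).2]
  exact infDist_le_dist_of_mem (hu _)

theorem eventually_nearestPts_subset_thickening {α : Type*} [MetricSpace α] [ProperSpace α]
    {Xs : ℕ → Set α} {X : Set α} (hXne : X.Nonempty) (hK : KConv Xs X)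
    {φ : ℕ → ℕ} (hφ : StrictMono φ) {x : ℕ → α} {x₀ : α} (hx : Tendsto x atTop (𝓝 x₀))
    {ε : ℝ} (hε : 0 < ε) :
    ∀ᶠ n in atTop, nearestPts (Xs (φ n)) (x n) ⊆ thickening ε (nearestPts X x₀) := by
  by_contra hcon
  obtain ⟨ψ, hψ, hbad⟩ := extraction_of_frequently_atTop (not_eventually.1 hcon)
  simp only [Set.not_subset] at hbad
  choose a ha hna using hbad
  have hxψ : Tendsto (x ∘ ψ) atTop (𝓝 x₀) := hx.comp hψ.tendsto_atTop
  -- The `a k` are bounded: they are no farther from `x (ψ k)` than points converging to some `b ∈ X`.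
  obtain ⟨b, hb⟩ := hXne
  obtain ⟨u, hu, hub⟩ : b ∈ KLiminf Xs := hK.1.symm ▸ hb
  have hd : Tendsto (fun k => dist (x (ψ k)) x₀ + dist (x (ψ k)) (u (φ (ψ k)))) atTop
      (𝓝 (dist x₀ x₀ + dist x₀ b)) :=
    (hxψ.dist tendsto_const_nhds).add (hxψ.dist (hub.comp (hφ.comp hψ).tendsto_atTop))
  obtain ⟨R, hR⟩ := hd.bddAbove_range
  have hbdd : ∀ k, a k ∈ closedBall x₀ R := fun k => by
    have h1 := hR ⟨k, rfl⟩
    have h2 : dist (x (ψ k)) (a k) ≤ dist (x (ψ k)) (u (φ (ψ k))) :=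
      (ha k).2.trans_le (infDist_le_dist_of_mem (hu _))
    have h3 := dist_triangle_left (a k) x₀ (x (ψ k))
    rw [mem_closedBall]
    dsimp only at h1
    linarith
  obtain ⟨a₀, -, θ, hθ, hlim⟩ := tendsto_subseq_of_bounded isBounded_closedBall hbdd
  have hmem : a₀ ∈ nearestPts X x₀ :=
    mem_nearestPts_of_tendsto hK (hφ.comp (hψ.comp hθ)) (hxψ.comp hθ.tendsto_atTop) hlim
      fun n => ha (θ n)
  have hnot : a₀ ∈ (thickening ε (nearestPts X x₀))ᶜ :=
    isOpen_thickening.isClosed_compl.mem_of_tendsto hlim (Eventually.of_forall fun n => hna (θ n))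
  exact hnot (self_subset_thickening hε _ hmem)

/-- if closed sets `X_n ⊆ ℝ^p` converge to a nonempty closed set `X`,
then the Kuratowski upper limit of the graphs of `x ↦ conv P_{X_n}(x)` is contained
in the graph of `x ↦ conv P_X(x)`. -/
theorem stmt_10 {p : ℕ} (Xs : ℕ → Set (EuclideanSpace ℝ (Fin p)))
    (hXs : ∀ n, IsClosed (Xs n))
    (X : Set (EuclideanSpace ℝ (Fin p))) (hXne : X.Nonempty) (hXcl : IsClosed X)
    (hK : KConv Xs X) :
    KLimsup (fun n => mgraph Set.univ (fun x => convexHull ℝ (nearestPts (Xs n) x))) ⊆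
      mgraph Set.univ (fun x => convexHull ℝ (nearestPts X x)) := by
  rintro ⟨x₀, y₀⟩ ⟨φ, hφ, q, hq, hlim⟩
  refine ⟨trivial, ?_⟩
  obtain ⟨hx, hy⟩ := (Prod.tendsto_iff _ _).1 hlim
  have hcl : IsClosed (convexHull ℝ (nearestPts X x₀)) :=
    (isCompact_convexHull_of_finiteDimensional (isCompact_nearestPts hXcl x₀)).isClosed
  change y₀ ∈ convexHull ℝ (nearestPts X x₀)
  rw [← hcl.closure_eq, closure_eq_iInter_cthickening]
  simp only [Set.mem_iInter]
  intro ε hε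
  refine isClosed_cthickening.mem_of_tendsto hy ?_
  filter_upwards [eventually_nearestPts_subset_thickening hXne hK hφ hx hε] with n hn
  exact convexHull_min (hn.trans ((thickening_subset_of_subset ε (subset_convexHull ℝ _)).trans
    (thickening_subset_cthickening ε _))) ((convex_convexHull ℝ _).cthickening ε) (hq n).2
end

section
/- Let x_1, …, x_k ∈ ℝ² with x_1, x_2, x_3 affinely independent. Assume that each of the segments [x_1, x_2], [x_2, x_3], [x_3, x_1] is locally Delaunay with respect to the system {x_1, …, x_k}, and that x_i ∉ conv{x_1, x_2, x_3} for all i = 4, …, k. Then there exist a ∈ ℝ² and r > 0 such that x_1, x_2, x_3 all lie on the sphere S(a, r) and the open ball B(a, r) is disjoint from {x_1, …, x_k}. -/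
/-!
Let `S(a, r)` be the circumcircle of the triangle `x₁x₂x₃`, and suppose some `z = x_i` satisfies
`|z - a| < r`. Write `z = w₁ x₁ + w₂ x₂ + w₃ x₃` with `w₁ + w₂ + w₃ = 1`. If `S(b, s)` is an empty
circle through `x₁, x₂`, the difference of the powers of a point with respect to `S(a, r)` and
`S(b, s)` is an affine function (`dist_sq_sub_dist_sq`) that vanishes at `x₁` and `x₂` and is
nonpositive at `x₃`, while it is negative at `z`; hence `w₃ > 0` (`weight_pos`). By symmetry all
three weights are positive, so `z` lies in the triangle. The other points of the system are
outside the triangle and the vertices are on the circle, which is a contradiction.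
-/

open Metric

/-- A segment with endpoints `u, v` is locally Delaunay with respect to the system of
points `s` if there is a circle through `u` and `v` whose open disc contains no point
of `s`. -/
def LocallyDelaunay (s : Set (EuclideanSpace ℝ (Fin 2)))
    (u v : EuclideanSpace ℝ (Fin 2)) : Prop :=
  ∃ (a : EuclideanSpace ℝ (Fin 2)) (r : ℝ), 0 < r ∧
    dist u a = r ∧ dist v a = r ∧ ∀ z ∈ s, ¬ dist z a < r

/-- The difference of the squared distances to two fixed points is an affine function,
so it commutes with affine combinations. -/
lemma dist_sq_sub_dist_sq (p₁ p₂ p₃ a b : EuclideanSpace ℝ (Fin 2)) (w₁ w₂ w₃ : ℝ)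
    (hw : w₁ + w₂ + w₃ = 1) :
    dist (w₁ • p₁ + w₂ • p₂ + w₃ • p₃) a ^ 2 - dist (w₁ • p₁ + w₂ • p₂ + w₃ • p₃) b ^ 2 =
      w₁ * (dist p₁ a ^ 2 - dist p₁ b ^ 2) + w₂ * (dist p₂ a ^ 2 - dist p₂ b ^ 2) +
        w₃ * (dist p₃ a ^ 2 - dist p₃ b ^ 2) := by
  obtain rfl : w₁ = 1 - w₂ - w₃ := by linarith
  simp only [EuclideanSpace.dist_sq_eq, Fin.sum_univ_two, Real.dist_eq, sq_abs, PiLp.add_apply,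
    PiLp.smul_apply, smul_eq_mul]
  ring

/-- A point inside the circumcircle of `p₁p₂p₃` but not inside some circle through `p₁, p₂` which
has `p₃` outside or on it lies on the same side of the line `p₁p₂` as `p₃`, expressed by the
barycentric weight of `p₃`. -/
lemma weight_pos {p₁ p₂ p₃ a b : EuclideanSpace ℝ (Fin 2)} {w₁ w₂ w₃ r s : ℝ}
    (hw : w₁ + w₂ + w₃ = 1) (h₁ : dist p₁ a = r) (h₂ : dist p₂ a = r) (h₃ : dist p₃ a = r)
    (hs : 0 < s) (g₁ : dist p₁ b = s) (g₂ : dist p₂ b = s) (g₃ : s ≤ dist p₃ b)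
    (hza : dist (w₁ • p₁ + w₂ • p₂ + w₃ • p₃) a < r)
    (hzb : s ≤ dist (w₁ • p₁ + w₂ • p₂ + w₃ • p₃) b) : 0 < w₃ := by
  have key := dist_sq_sub_dist_sq p₁ p₂ p₃ a b w₁ w₂ w₃ hw
  have ha := pow_lt_pow_left₀ hza dist_nonneg two_ne_zero
  have hb := pow_le_pow_left₀ hs.le hzb 2
  have hc := pow_le_pow_left₀ hs.le g₃ 2
  rw [h₁, h₂, h₃, g₁, g₂] at key
  obtain rfl : w₁ = 1 - w₂ - w₃ := by linarith
  by_contra! hneg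
  nlinarith [mul_nonneg (neg_nonneg.mpr hneg) (sub_nonneg.mpr hc)]

/-- given points `x_1, …, x_k` in the plane with `x_1, x_2, x_3` affinely
independent, if the three segments `[x_1,x_2]`, `[x_2,x_3]`, `[x_3,x_1]` are locally
Delaunay with respect to the system and no other point of the system lies in
`conv{x_1,x_2,x_3}`, then there is a circle through `x_1, x_2, x_3` whose open disc
misses the whole system. -/
theorem stmt_12 {k : ℕ} (hk : 3 ≤ k) (x : Fin k → EuclideanSpace ℝ (Fin 2))
    (i₁ : Fin k) (i₂ : Fin k) (i₃ : Fin k)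
    (hi₁ : (i₁ : ℕ) = 0) (hi₂ : (i₂ : ℕ) = 1) (hi₃ : (i₃ : ℕ) = 2)
    (hind : AffineIndependent ℝ ![x i₁, x i₂, x i₃])
    (h12 : LocallyDelaunay (Set.range x) (x i₁) (x i₂))
    (h23 : LocallyDelaunay (Set.range x) (x i₂) (x i₃))
    (h31 : LocallyDelaunay (Set.range x) (x i₃) (x i₁))
    (hout : ∀ i : Fin k, 3 ≤ (i : ℕ) →
      x i ∉ convexHull ℝ ({x i₁, x i₂, x i₃} : Set (EuclideanSpace ℝ (Fin 2)))) :
    ∃ (a : EuclideanSpace ℝ (Fin 2)) (r : ℝ), 0 < r ∧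
      dist (x i₁) a = r ∧ dist (x i₂) a = r ∧ dist (x i₃) a = r ∧
      ∀ i : Fin k, ¬ dist (x i) a < r := by
  obtain ⟨b₃, s₃, hs₃, e₁, e₂, e₃⟩ := h12
  obtain ⟨b₁, s₁, hs₁, f₂, f₃, f₁⟩ := h23
  obtain ⟨b₂, s₂, hs₂, g₃, g₁, g₂⟩ := h31
  let T : Affine.Simplex ℝ (EuclideanSpace ℝ (Fin 2)) 2 := ⟨![x i₁, x i₂, x i₃], hind⟩
  have c₁ : dist (x i₁) T.circumcenter = T.circumradius := T.dist_circumcenter_eq_circumradius 0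
  have c₂ : dist (x i₂) T.circumcenter = T.circumradius := T.dist_circumcenter_eq_circumradius 1
  have c₃ : dist (x i₃) T.circumcenter = T.circumradius := T.dist_circumcenter_eq_circumradius 2
  refine ⟨T.circumcenter, T.circumradius, T.circumradius_pos, c₁, c₂, c₃, fun i hi => ?_⟩
  by_cases h3 : 3 ≤ (i : ℕ)
  · have hspan : affineSpan ℝ (Set.range ![x i₁, x i₂, x i₃]) = ⊤ :=
      hind.affineSpan_eq_top_iff_card_eq_finrank_add_one.2 (by simp)
    have hmem : x i ∈ affineSpan ℝ (Set.range ![x i₁, x i₂, x i₃]) := by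
      rw [hspan]; exact AffineSubspace.mem_top _ _ _
    obtain ⟨w, hw, hz⟩ := eq_affineCombination_of_mem_affineSpan_of_fintype hmem
    rw [Finset.affineCombination_eq_linear_combination _ _ _ hw] at hz
    simp only [Fin.sum_univ_three, Matrix.cons_val] at hw hz
    have n₁ := not_lt.1 (f₁ _ ⟨i, rfl⟩)
    have n₂ := not_lt.1 (g₂ _ ⟨i, rfl⟩)
    have n₃ := not_lt.1 (e₃ _ ⟨i, rfl⟩)
    have z₁ : x i = w 1 • x i₂ + w 2 • x i₃ + w 0 • x i₁ := by rw [hz]; abel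
    have z₂ : x i = w 2 • x i₃ + w 0 • x i₁ + w 1 • x i₂ := by rw [hz]; abel
    have p₃ : 0 < w 2 := weight_pos hw c₁ c₂ c₃ hs₃ e₁ e₂ (not_lt.1 (e₃ _ ⟨i₃, rfl⟩))
      (hz ▸ hi) (hz ▸ n₃)
    have p₁ : 0 < w 0 := weight_pos (by linarith) c₂ c₃ c₁ hs₁ f₂ f₃
      (not_lt.1 (f₁ _ ⟨i₁, rfl⟩)) (z₁ ▸ hi) (z₁ ▸ n₁)
    have p₂ : 0 < w 1 := weight_pos (by linarith) c₃ c₁ c₂ hs₂ g₃ g₁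
      (not_lt.1 (g₂ _ ⟨i₂, rfl⟩)) (z₂ ▸ hi) (z₂ ▸ n₂)
    refine hout i h3 ?_
    have hconv := convex_convexHull ℝ ({x i₁, x i₂, x i₃} : Set (EuclideanSpace ℝ (Fin 2)))
    have hsum := hconv.sum_mem (t := Finset.univ) (w := w) (z := ![x i₁, x i₂, x i₃])
      (fun j _ => by fin_cases j <;> simp [p₁.le, p₂.le, p₃.le])
      (by simpa [Fin.sum_univ_three] using hw)
      (fun j _ => subset_convexHull ℝ _ (by fin_cases j <;> simp))
    simpa [Fin.sum_univ_three, ← hz] using hsum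
  · have hcases : i = i₁ ∨ i = i₂ ∨ i = i₃ := by
      simp only [Fin.ext_iff]; omega
    rcases hcases with rfl | rfl | rfl
    · exact hi.ne c₁
    · exact hi.ne c₂
    · exact hi.ne c₃
end

section
/- Let f : ℝ² → ℝ be the polynomial f(x, y) = x(x − y)². Then there is no sequence of nonzero real numbers t_n → 0 such that the level sets f⁻¹(t_n) converge in the Painlevé–Kuratowski sense to the zero set f⁻¹(0). -/
open Filter Topology Metric MeasureTheory

/-- for `f(x, y) = x(x - y)²` on `ℝ²` there is no sequence of nonzero
levels `t_n → 0` whose level sets `f⁻¹(t_n)` converge in the Painlevé–Kuratowski sense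
to the zero set `f⁻¹(0)`. -/
theorem stmt_19 :
    ¬ ∃ t : ℕ → ℝ, (∀ n, t n ≠ 0) ∧ Tendsto t atTop (𝓝 0) ∧
      KConv (fun n => {z : ℝ × ℝ | z.1 * (z.1 - z.2) ^ 2 = t n})
        {z : ℝ × ℝ | z.1 * (z.1 - z.2) ^ 2 = 0} := by
  -- Near `(1, 1)` the value `f z` is nonnegative, near `(-1, -1)` it is nonpositive; both points lie
  -- in the zero set, so for large `n` the level `t n` has both signs and vanishes.
  rintro ⟨t, ht, -, hlim, -⟩
  have h₁ : ((1, 1) : ℝ × ℝ) ∈ {z : ℝ × ℝ | z.1 * (z.1 - z.2) ^ 2 = 0} := by simp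
  have h₂ : ((-1, -1) : ℝ × ℝ) ∈ {z : ℝ × ℝ | z.1 * (z.1 - z.2) ^ 2 = 0} := by simp
  rw [← hlim] at h₁ h₂
  obtain ⟨u, hu, hu_lim⟩ := h₁
  obtain ⟨v, hv, hv_lim⟩ := h₂
  have hu_pos : ∀ᶠ n in atTop, 0 < (u n).1 :=
    hu_lim.fst_nhds.eventually (lt_mem_nhds (by norm_num))
  have hv_neg : ∀ᶠ n in atTop, (v n).1 < 0 :=
    hv_lim.fst_nhds.eventually (gt_mem_nhds (by norm_num))
  obtain ⟨n, hun, hvn⟩ := (hu_pos.and hv_neg).exists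
  have h_nonneg : 0 ≤ t n := (hu n) ▸ mul_nonneg hun.le (sq_nonneg _)
  have h_nonpos : t n ≤ 0 := (hv n) ▸ mul_nonpos_of_nonpos_of_nonneg hvn.le (sq_nonneg _)
  exact ht n (le_antisymm h_nonpos h_nonneg)
end
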